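/- Let g : ℝ^n → ℝ^m be continuously differentiable and suppose the derivative D(u) := Dg(u) : ℝ^n → ℝ^m is surjective for every u in the zero set of g. Let f : ℝ^n → ℝ^n be continuous, and let u : ℝ → ℝ^n be a differentiable curve satisfying g(u(0)) = 0 and, for all t ≥ 0, the projected differential equation u'(t) = f(u(t)) − D(u(t))* [ (D(u(t)) ∘ D(u(t))*)⁻¹ [ D(u(t))[f(u(t))] ] ], where D(u)* denotes the adjoint of D(u) with respect to the Euclidean inner products. Then g(u(t)) = 0 for all t ≥ 0. -/

import Mathlib

open ContinuousLinearMap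

theorem pnde_aux_inj {n m : ℕ}
    (T : EuclideanSpace ℝ (Fin n) →L[ℝ] EuclideanSpace ℝ (Fin m))
    (hT : Function.Surjective T) : (T.comp (adjoint T)).IsInvertible := by
  have hinj : Function.Injective (T.comp (adjoint T)).toLinearMap := by
    rw [injective_iff_map_eq_zero]
    intro y hy
    have hy' : T (adjoint T y) = 0 := hy
    have h1 : adjoint T y = 0 := by
      rw [← inner_self_eq_zero (𝕜 := ℝ), adjoint_inner_left, hy', inner_zero_right]
    obtain ⟨x, rfl⟩ := hT y
    rw [← inner_self_eq_zero (𝕜 := ℝ), ← adjoint_inner_right, h1, inner_zero_right]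
  exact ⟨(LinearEquiv.ofInjectiveEndo _ hinj).toContinuousLinearEquiv, by ext; rfl⟩

/-- Solutions of the projected neural differential equation
`u' = f(u) − Dg(u)* [(Dg(u) ∘ Dg(u)*)⁻¹ [Dg(u)[f(u)]]]` starting on the
constraint manifold `{u ; g u = 0}` remain on it for all `t ≥ 0`. -/
theorem pnde_explicit_projection_stays_on_manifold
    {n m : ℕ}
    (g : EuclideanSpace ℝ (Fin n) → EuclideanSpace ℝ (Fin m))
    (hg : ContDiff ℝ 1 g)
    (D : EuclideanSpace ℝ (Fin n) → EuclideanSpace ℝ (Fin n) →L[ℝ] EuclideanSpace ℝ (Fin m))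
    (hD : ∀ x, D x = fderiv ℝ g x)
    (hsurj : ∀ x, g x = 0 → Function.Surjective (D x))
    (f : EuclideanSpace ℝ (Fin n) → EuclideanSpace ℝ (Fin n))
    (hf : Continuous f)
    (u : ℝ → EuclideanSpace ℝ (Fin n)) (hu : Differentiable ℝ u)
    (h0 : g (u 0) = 0)
    (hode : ∀ t : ℝ, 0 ≤ t →
      deriv u t = f (u t) -
        adjoint (D (u t))
          (((D (u t)).comp (adjoint (D (u t)))).inverse ((D (u t)) (f (u t))))) :
    ∀ t : ℝ, 0 ≤ t → g (u t) = 0 := by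
  have hgu : Continuous (fun t => g (u t)) := hg.continuous.comp hu.continuous
  have hDc : Continuous (fun t => (D (u t)).comp (adjoint (D (u t)))) := by
    have h1 : Continuous (fun t => D (u t)) := by
      simp only [hD]
      exact (hg.continuous_fderiv one_ne_zero).comp hu.continuous
    exact h1.clm_comp (adjoint.continuous.comp h1)
  intro T hT
  have key : Set.Icc 0 T ⊆ {t | g (u t) = 0} := by
    refine IsClosed.Icc_subset_of_forall_mem_nhdsWithin ?_ h0 ?_
    · exact (isClosed_eq hgu continuous_const).inter isClosed_Icc
    · rintro t ⟨ht, ht0, -⟩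
      have hinv := pnde_aux_inj _ (hsurj _ ht)
      obtain ⟨e, he⟩ := hinv
      have hev : ∀ᶠ s in nhds t, ((D (u s)).comp (adjoint (D (u s)))).IsInvertible := by
        have h5 := e.nhds
        rw [he] at h5
        exact (hDc.tendsto t) h5
      obtain ⟨ε, hε, hball⟩ := Metric.eventually_nhds_iff.1 hev
      have hmem : Set.Ioo t (t + ε) ∈ nhdsWithin t (Set.Ioi t) :=
        Ioo_mem_nhdsGT (by linarith)
      filter_upwards [hmem] with s hs
      have hder : ∀ r ∈ Set.Ico t s, HasDerivWithinAt (fun t => g (u t)) 0 (Set.Ici r) r := by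
        intro r hr
        have hri : ((D (u r)).comp (adjoint (D (u r)))).IsInvertible := by
          apply hball
          rw [Real.dist_eq, abs_lt]
          constructor <;> linarith [hr.1, hr.2, hs.2]
        have h2 : HasFDerivAt g (D (u r)) (u r) := by
          rw [hD]; exact (hg.differentiable one_ne_zero _).hasFDerivAt
        have h3 := h2.comp_hasDerivAt r (hu r).hasDerivAt
        have h4 : D (u r) (deriv u r) = 0 := by
          rw [hode r (le_trans ht0 hr.1), map_sub, sub_eq_zero]
          exact (hri.self_apply_inverse _).symm
        rw [h4] at h3
        exact h3.hasDerivWithinAt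
      have := constant_of_has_deriv_right_zero hgu.continuousOn hder s ⟨hs.1.le, le_rfl⟩
      exact this.trans ht
  exact key ⟨hT, le_rfl⟩
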